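/- Let B be an n×n integer matrix satisfying the bounded discrete derivative condition |B_{i,j} + B_{i+1,j+1} − B_{i+1,j} − B_{i,j+1}| ≤ M for all 1 ≤ i, j ≤ n−1. Then for every Δ ≥ 1 and every Δ×Δ contiguous block of B (the submatrix with row indices in an interval I of length Δ and column indices in an interval J of length Δ), there exist integer vectors X(i) ∈ ℤ² for i ∈ I and Y(j) ∈ ℤ² for j ∈ J such that |B_{i,j} − X(i)ᵀY(j)| ≤ M·Δ² for all (i, j) ∈ I × J. In particular, every Δ×Δ block of B has M·Δ²-approximate rank at most 2. -/

import Mathlib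

/-!
The mixed difference of `B` over a rectangle is the sum of the mixed differences over its unit
cells, so on a `p × q` block it is at most `M * (p * q)` in absolute value. On the other hand, the
mixed difference with respect to a fixed corner `(i₀, j₀)` is exactly the error of approximating
`B i j` by `B i₀ j + (B i j₀ - B i₀ j₀)`, which is an inner product of two vectors of length `2`.
-/

open Finset

/-- The mixed second difference of `B` over the rectangle with opposite corners `(i, j)` and
`(i', j')`; for `i' = i + 1` and `j' = j + 1` this is the discrete derivative of `B` at `(i, j)`. -/
def mixedDiff {ι κ G : Type*} [AddCommGroup G] (B : ι → κ → G) (i i' : ι) (j j' : κ) : G :=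
  B i j + B i' j' - B i' j - B i j'

theorem mixedDiff_eq_sum_Ico {G : Type*} [AddCommGroup G] (B : ℕ → ℕ → G) {i i' j j' : ℕ}
    (hi : i ≤ i') (hj : j ≤ j') :
    mixedDiff B i i' j j' =
      ∑ k ∈ Ico i i', ∑ l ∈ Ico j j', mixedDiff B k (k + 1) l (l + 1) := by
  have sum_row (k : ℕ) : ∑ l ∈ Ico j j', mixedDiff B k (k + 1) l (l + 1) =
      (B (k + 1) j' - B (k + 1) j) - (B k j' - B k j) := by
    calc ∑ l ∈ Ico j j', mixedDiff B k (k + 1) l (l + 1)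
        = ∑ l ∈ Ico j j', ((B (k + 1) (l + 1) - B k (l + 1)) - (B (k + 1) l - B k l)) :=
          sum_congr rfl fun l _ ↦ by rw [mixedDiff]; abel
      _ = (B (k + 1) j' - B k j') - (B (k + 1) j - B k j) :=
          sum_Ico_sub (fun l ↦ B (k + 1) l - B k l) hj
      _ = _ := by abel
  simp only [sum_row]
  rw [sum_Ico_sub (fun k ↦ B k j' - B k j) hi, mixedDiff]
  abel

section Bound

variable {G : Type*} [AddCommGroup G] [LinearOrder G] [IsOrderedAddMonoid G]
  {B : ℕ → ℕ → G} {M : G}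

theorem abs_mixedDiff_le {i i' j j' : ℕ} (hi : i ≤ i') (hj : j ≤ j')
    (hB : ∀ k ∈ Ico i i', ∀ l ∈ Ico j j', |mixedDiff B k (k + 1) l (l + 1)| ≤ M) :
    |mixedDiff B i i' j j'| ≤ ((i' - i) * (j' - j)) • M := by
  rw [mixedDiff_eq_sum_Ico B hi hj, ← sum_product', ← Nat.card_Ico, ← Nat.card_Ico,
    ← card_product]
  refine (abs_sum_le_sum_abs _ _).trans (sum_le_card_nsmul _ _ _ fun c hc ↦ ?_)
  obtain ⟨hk, hl⟩ := mem_product.mp hc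
  exact hB c.1 hk c.2 hl

theorem abs_mixedDiff_corner_le {p q i₀ j₀ i j : ℕ} (hM : 0 ≤ M)
    (hB : ∀ i j, i₀ ≤ i → i + 1 < i₀ + p → j₀ ≤ j → j + 1 < j₀ + q →
      |mixedDiff B i (i + 1) j (j + 1)| ≤ M)
    (hi₀ : i₀ ≤ i) (hip : i < i₀ + p) (hj₀ : j₀ ≤ j) (hjq : j < j₀ + q) :
    |mixedDiff B i₀ i j₀ j| ≤ (p * q) • M :=
  calc |mixedDiff B i₀ i j₀ j|
      ≤ ((i - i₀) * (j - j₀)) • M := abs_mixedDiff_le hi₀ hj₀ fun k hk l hl ↦ by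
        rw [mem_Ico] at hk hl
        exact hB k l hk.1 (by lia) hl.1 (by lia)
    _ ≤ (p * q) • M := nsmul_le_nsmul_left hM (Nat.mul_le_mul (by lia) (by lia))

end Bound

section CrossApproximation

variable {ι κ R : Type*}

/-- The vector attached to row `i` in the rank-two approximation of `B` by its row `i₀` and its
column `j₀`. -/
def crossRowVec [Ring R] (B : ι → κ → R) (i₀ : ι) (j₀ : κ) (i : ι) : Fin 2 → R :=
  ![1, B i j₀ - B i₀ j₀]

/-- The vector attached to column `j` in the rank-two approximation of `B` by its row `i₀` and a
fixed column. The corner entry is subtracted in `crossRowVec`, so only the row enters here. -/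
def crossColVec [Ring R] (B : ι → κ → R) (i₀ : ι) (j : κ) : Fin 2 → R :=
  ![B i₀ j, 1]

theorem sub_sum_crossRowVec_mul_crossColVec [Ring R] (B : ι → κ → R) (i₀ i : ι) (j₀ j : κ) :
    B i j - ∑ s, crossRowVec B i₀ j₀ i s * crossColVec B i₀ j s = mixedDiff B i₀ i j₀ j := by
  simp only [crossRowVec, crossColVec, mixedDiff, Fin.sum_univ_two, Matrix.cons_val_zero,
    Matrix.cons_val_one, one_mul, mul_one]
  abel

theorem rank_of_sum_mul_le_card {σ : Type*} [Fintype σ] [Fintype κ] [CommSemiring R]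
    [StrongRankCondition R] (X : ι → σ → R) (Y : κ → σ → R) :
    (Matrix.of fun a b ↦ ∑ s, X a s * Y b s).rank ≤ Fintype.card σ :=
  (Matrix.rank_mul_le_left (Matrix.of X) (Matrix.of Y).transpose).trans
    (Matrix.rank_le_card_width _)

end CrossApproximation

theorem stmt6_general {R : Type*} [CommRing R] [LinearOrder R] [IsStrictOrderedRing R]
    {M : R} {B : ℕ → ℕ → R} {p q i₀ j₀ : ℕ} (hM : 0 ≤ M)
    (hB : ∀ i j, i₀ ≤ i → i + 1 < i₀ + p → j₀ ≤ j → j + 1 < j₀ + q →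
      |B i j + B (i + 1) (j + 1) - B (i + 1) j - B i (j + 1)| ≤ M) :
    (∃ X Y : ℕ → Fin 2 → R,
      ∀ i j, i₀ ≤ i → i < i₀ + p → j₀ ≤ j → j < j₀ + q →
        |B i j - ∑ s, X i s * Y j s| ≤ M * (p * q)) ∧
    (∃ N : Matrix (Fin p) (Fin q) R, N.rank ≤ 2 ∧
      ∀ a b, |N a b - B (i₀ + a) (j₀ + b)| ≤ M * (p * q)) := by
  let X := crossRowVec B i₀ j₀
  let Y := crossColVec B i₀
  have approx (i j : ℕ) (hi₀ : i₀ ≤ i) (hip : i < i₀ + p) (hj₀ : j₀ ≤ j) (hjq : j < j₀ + q) :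
      |B i j - ∑ s, X i s * Y j s| ≤ M * (p * q) := by
    calc |B i j - ∑ s, X i s * Y j s|
        = |mixedDiff B i₀ i j₀ j| := by rw [sub_sum_crossRowVec_mul_crossColVec]
      _ ≤ (p * q) • M := abs_mixedDiff_corner_le hM hB hi₀ hip hj₀ hjq
      _ = M * (p * q) := by rw [nsmul_eq_mul, Nat.cast_mul, mul_comm]
  refine ⟨⟨X, Y, approx⟩, Matrix.of fun a b ↦ ∑ s, X (i₀ + a) s * Y (j₀ + b) s,
    rank_of_sum_mul_le_card (fun a : Fin p ↦ X (i₀ + a)) (fun b : Fin q ↦ Y (j₀ + b)), ?_⟩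
  intro a b
  rw [abs_sub_comm]
  exact approx _ _ (by lia) (by lia) (by lia) (by lia)

/-- If `B` has bounded discrete derivative (`|B_{i,j}+B_{i+1,j+1}-B_{i+1,j}-B_{i,j+1}| ≤ M`),
then every `Δ × Δ` contiguous block of `B` admits a rank-2 approximation (inner products of
2-dimensional integer vectors) within additive error `M·Δ²`; in particular every `Δ × Δ`
block has `M·Δ²`-approximate rank at most `2`. -/
theorem stmt6 (n : ℕ) (M : ℤ) (hM : 0 ≤ M) (B : ℕ → ℕ → ℤ)
    (hB : ∀ i j, i + 1 < n → j + 1 < n →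
      |B i j + B (i+1) (j+1) - B (i+1) j - B i (j+1)| ≤ M) :
    ∀ Δ : ℕ, 1 ≤ Δ → ∀ i₀ j₀ : ℕ, i₀ + Δ ≤ n → j₀ + Δ ≤ n →
      (∃ X Y : ℕ → Fin 2 → ℤ,
        ∀ i j, i₀ ≤ i → i < i₀ + Δ → j₀ ≤ j → j < j₀ + Δ →
          |B i j - ∑ s, X i s * Y j s| ≤ M * (Δ : ℤ) ^ 2) ∧
      (∃ N : Matrix (Fin Δ) (Fin Δ) ℤ, N.rank ≤ 2 ∧
        ∀ a b : Fin Δ, |N a b - B (i₀ + a) (j₀ + b)| ≤ M * (Δ : ℤ) ^ 2) := by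
  intro Δ _ i₀ j₀ hi hj
  simpa only [sq] using stmt6_general hM fun i j _ _ _ _ ↦ hB i j (by lia) (by lia)
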